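/- arXiv:1707.03507 — 3 statements merged into one kernel-verified Lean document; each statement's English description precedes it below -/
import Mathlib

section
/- Let G be a finite simple graph with m edges that is a disjoint union of odd cycles. Then there exist an orientation D of G and a bijection c from the arc set of D to {1, 2, …, m} such that the vertex-sums of all vertices of D under c are pairwise distinct, every vertex-sum is nonzero, and every vertex-sum has absolute value at most 2m − 1. -/
open Finset

/-- `A` is an orientation of the simple graph `G`: every edge of `G` receives exactly one
direction, and every arc of `A` comes from an edge of `G`. -/
def IsOrientation {V : Type*} (G : SimpleGraph V) (A : Finset (V × V)) : Prop :=
  (∀ u v : V, G.Adj u v ↔ ((u, v) ∈ A ∨ (v, u) ∈ A)) ∧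
    ∀ u v : V, ¬((u, v) ∈ A ∧ (v, u) ∈ A)

/-- The vertex-sum of `u` for the arc-labeling `c`: the sum of labels of arcs entering `u`
minus the sum of labels of arcs leaving `u`. -/
def vertexSum {V : Type*} [DecidableEq V] (A : Finset (V × V)) (c : V × V → ℤ) (u : V) : ℤ :=
  (∑ a ∈ A.filter (fun a => a.2 = u), c a) - ∑ a ∈ A.filter (fun a => a.1 = u), c a

theorem rank_exists {V K : Type*} [LinearOrder K] (R : Finset V) (key : V → K) :
    ∃ g : V → ℕ, (∀ x ∈ R, 1 ≤ g x ∧ g x ≤ R.card) ∧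
      ∀ x ∈ R, ∀ y ∈ R, key x < key y → g x < g y := by
  classical
  refine ⟨fun x => (R.filter (fun z => key z ≤ key x)).card, ?_, ?_⟩
  · intro x hx
    refine ⟨Finset.card_pos.mpr ⟨x, by simp [hx]⟩, Finset.card_le_card (Finset.filter_subset _ _)⟩
  · intro x hx y hy h
    apply Finset.card_lt_card
    refine ⟨?_, ?_⟩
    · intro z hz
      simp only [Finset.mem_filter] at hz ⊢
      exact ⟨hz.1, hz.2.trans h.le⟩
    · intro hsub
      have : y ∈ R.filter (fun z => key z ≤ key x) := hsub (by simp [hy])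
      simp only [Finset.mem_filter] at this
      exact absurd h (not_lt.mpr this.2)

theorem label_exists {V : Type*} [Fintype V] [DecidableEq V] (t : ℕ) (N : ℕ → ℕ) (J I : V → ℕ)
    (hJ : ∀ x, J x < t) (hI : ∀ x, I x < N (J x))
    (hinj : ∀ x y, J x = J y → I x = I y → x = y)
    (hsurj : ∀ j i, j < t → i < N j → ∃ x, J x = j ∧ I x = i)
    (hN3 : ∀ j, j < t → 3 ≤ N j) (hodd : ∀ j, j < t → Odd (N j))
    (hmono : ∀ i j, i ≤ j → j < t → N i ≤ N j) :
    ∃ lab : V → ℕ, Function.Injective lab ∧ (∀ x, 1 ≤ lab x ∧ lab x ≤ Fintype.card V) ∧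
      (∀ x, I x = 0 → lab x = 2 * J x + 1) ∧
      (∀ x, I x + 1 = N (J x) → lab x + 2 * J x = 2 * t) ∧
      (∀ x, I x + 2 = N (J x) → lab x = 2 * t + 1 + J x) ∧
      (∀ x y, min (I x) (N (J x) - 1 - I x) < min (I y) (N (J y) - 1 - I y) → lab x < lab y) ∧
      (∀ x y, I x = I y → 2 * I x < N (J x) → 2 * I y < N (J y) → J x < J y → lab x < lab y) ∧
      (∀ x y, N (J x) - 1 - I x = N (J y) - 1 - I y → 2 ≤ N (J x) - I x →
        N (J x) ≤ 2 * I x + 1 → N (J y) ≤ 2 * I y + 1 → J x < J y → lab x < lab y) := by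
  classical
  set R : Finset V := univ.filter (fun x => 1 ≤ I x ∧ I x + 3 ≤ N (J x)) with hR
  obtain ⟨g, hg1, hg2⟩ := rank_exists R
    (fun x => toLex (min (I x) (N (J x) - 1 - I x), toLex (J x, I x)))
  have hmemR : ∀ x, x ∈ R ↔ 1 ≤ I x ∧ I x + 3 ≤ N (J x) := by intro x; simp [hR]
  have hcard : R.card + 3 * t ≤ Fintype.card V := by
    have hc : ∀ f : ℕ → ℕ, (∀ j, j < t → f j < N j) →
        t ≤ (univ.filter (fun x : V => I x = f (J x))).card := by
      intro f hf
      have := Finset.card_le_card_of_surjOn (s := univ.filter (fun x : V => I x = f (J x)))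
        (t := range t) J (by
          intro j hj
          have hj' : j < t := by simpa using hj
          obtain ⟨x, hx1, hx2⟩ := hsurj j (f j) hj' (hf j hj')
          exact ⟨x, by simp [hx1, hx2], hx1⟩)
      simpa using this
    have h0 := hc (fun _ => 0) (fun j hj => by have := hN3 j hj; omega)
    have h1 := hc (fun j => N j - 1) (fun j hj => by have := hN3 j hj; omega)
    have h2 := hc (fun j => N j - 2) (fun j hj => by have := hN3 j hj; omega)
    set A0 := univ.filter (fun x : V => I x = 0)
    set A1 := univ.filter (fun x : V => I x = N (J x) - 1)
    set A2 := univ.filter (fun x : V => I x = N (J x) - 2)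
    have d1 : Disjoint A0 A1 := by
      rw [Finset.disjoint_left]; intro x hx hy
      have := hN3 _ (hJ x)
      simp [A0, A1] at hx hy; omega
    have d2 : Disjoint (A0 ∪ A1) A2 := by
      rw [Finset.disjoint_left]; intro x hx hy
      have := hN3 _ (hJ x)
      simp [A0, A1, A2] at hx hy; omega
    have d3 : Disjoint (A0 ∪ A1 ∪ A2) R := by
      rw [Finset.disjoint_left]; intro x hx hy
      have := hN3 _ (hJ x)
      rw [hmemR] at hy
      simp [A0, A1, A2] at hx; omega
    have := Finset.card_le_univ (A0 ∪ A1 ∪ A2 ∪ R)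
    rw [Finset.card_union_of_disjoint d3, Finset.card_union_of_disjoint d2,
      Finset.card_union_of_disjoint d1] at this
    omega
  have hkey : ∀ x y, x ∈ R → y ∈ R →
      (min (I x) (N (J x) - 1 - I x) < min (I y) (N (J y) - 1 - I y) ∨
       (min (I x) (N (J x) - 1 - I x) = min (I y) (N (J y) - 1 - I y) ∧
        (J x < J y ∨ (J x = J y ∧ I x < I y)))) → g x < g y := by
    intro x y hx hy h
    apply hg2 x hx y hy
    simp only [Prod.Lex.toLex_lt_toLex]
    exact h
  obtain ⟨lab, hlab⟩ : ∃ lab : V → ℕ, ∀ x, lab x = if I x = 0 then 2 * J x + 1 else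
      if I x + 1 = N (J x) then 2 * t - 2 * J x else
      if I x + 2 = N (J x) then 2 * t + 1 + J x else 3 * t + g x := ⟨_, fun _ => rfl⟩
  have e0 : ∀ x, I x = 0 → lab x = 2 * J x + 1 := by
    intro x h; rw [hlab, if_pos h]
  have e1 : ∀ x, I x + 1 = N (J x) → lab x + 2 * J x = 2 * t := by
    intro x h
    have := hN3 _ (hJ x); have := hJ x
    rw [hlab, if_neg (by omega), if_pos h]; omega
  have e2 : ∀ x, I x + 2 = N (J x) → lab x = 2 * t + 1 + J x := by
    intro x h
    have := hN3 _ (hJ x)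
    rw [hlab, if_neg (by omega), if_neg (by omega), if_pos h]
  have e3 : ∀ x, x ∈ R → lab x = 3 * t + g x := by
    intro x h
    rw [hmemR] at h
    rw [hlab, if_neg (by omega), if_neg (by omega), if_neg (by omega)]
  have cases4 : ∀ x, (I x = 0 ∧ lab x = 2 * J x + 1) ∨
      (I x + 1 = N (J x) ∧ lab x + 2 * J x = 2 * t) ∨
      (I x + 2 = N (J x) ∧ lab x = 2 * t + 1 + J x) ∨
      (x ∈ R ∧ 1 ≤ I x ∧ I x + 3 ≤ N (J x) ∧ lab x = 3 * t + g x ∧ 1 ≤ g x ∧ g x ≤ R.card) := by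
    intro x
    have h := hI x
    by_cases h0 : I x = 0
    · exact Or.inl ⟨h0, e0 x h0⟩
    by_cases h1 : I x + 1 = N (J x)
    · exact Or.inr (Or.inl ⟨h1, e1 x h1⟩)
    by_cases h2 : I x + 2 = N (J x)
    · exact Or.inr (Or.inr (Or.inl ⟨h2, e2 x h2⟩))
    have hm : x ∈ R := by rw [hmemR]; omega
    refine Or.inr (Or.inr (Or.inr ⟨hm, by omega, by omega, e3 x hm, hg1 x hm⟩))
  refine ⟨lab, ?_, ?_, e0, e1, e2, ?_, ?_, ?_⟩
  · intro x y hxy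
    have a1 := hN3 _ (hJ x)
    have a2 := hN3 _ (hJ y)
    have b1 := hJ x
    have b2 := hJ y
    have key : J x = J y → I x = I y → x = y := hinj x y
    have k1 := hkey x y
    have k2 := hkey y x
    rcases cases4 x with hx | hx | hx | hx <;> rcases cases4 y with hy | hy | hy | hy
    all_goals first
      | (exfalso; omega)
      | (have hjj : J x = J y := by omega
         apply key hjj
         rw [hjj] at hx
         omega)
      | skip
    have k1 := k1 hx.1 hy.1
    have k2 := k2 hy.1 hx.1
    by_contra hne
    have : ¬ (J x = J y ∧ I x = I y) := fun h => hne (key h.1 h.2)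
    omega
  · intro x
    have b1 := hJ x
    rcases cases4 x with hx | hx | hx | hx <;> omega
  · intro x y h
    have a1 := hN3 _ (hJ x)
    have a2 := hN3 _ (hJ y)
    have b1 := hJ x
    have b2 := hJ y
    have k1 := hkey x y
    rcases cases4 x with hx | hx | hx | hx <;> rcases cases4 y with hy | hy | hy | hy
    all_goals first
      | omega
      | skip
    have k1 := k1 hx.1 hy.1 (Or.inl h)
    omega
  · intro x y h h1 h2 hj
    have a1 := hN3 _ (hJ x)
    have a2 := hN3 _ (hJ y)
    have b1 := hJ x
    have b2 := hJ y
    have c1 := hmono _ _ hj.le b2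
    have k1 := hkey x y
    have o1 := hodd _ b1
    have o2 := hodd _ b2
    rcases o1 with ⟨p, o1⟩
    rcases o2 with ⟨q, o2⟩
    rcases cases4 x with hx | hx | hx | hx <;> rcases cases4 y with hy | hy | hy | hy
    all_goals first
      | omega
      | skip
    have k1 := k1 hx.1 hy.1 (Or.inr ⟨by omega, Or.inl hj⟩)
    omega
  · intro x y h h0 h1 h2 hj
    have a1 := hN3 _ (hJ x)
    have a2 := hN3 _ (hJ y)
    have b1 := hJ x
    have b2 := hJ y
    have k1 := hkey x y
    rcases cases4 x with hx | hx | hx | hx <;> rcases cases4 y with hy | hy | hy | hy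
    all_goals first
      | omega
      | skip
    have k1 := k1 hx.1 hy.1 (Or.inr ⟨by omega, Or.inl hj⟩)
    omega

theorem signed_distinct {V : Type*} [Fintype V] [DecidableEq V] (t : ℕ) (N : ℕ → ℕ) (J I : V → ℕ)
    (s : V → V)
    (hJ : ∀ x, J x < t) (hI : ∀ x, I x < N (J x))
    (hinj : ∀ x y, J x = J y → I x = I y → x = y)
    (hsurj : ∀ j i, j < t → i < N j → ∃ x, J x = j ∧ I x = i)
    (hN3 : ∀ j, j < t → 3 ≤ N j) (hodd : ∀ j, j < t → Odd (N j))
    (hmono : ∀ i j, i ≤ j → j < t → N i ≤ N j)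
    (hsJ : ∀ x, J (s x) = J x)
    (hsI : ∀ x, (I x + 1 = N (J x) ∧ I (s x) = 0) ∨ (I x + 1 < N (J x) ∧ I (s x) = I x + 1)) :
    ∃ lab : V → ℕ, Function.Injective lab ∧ (∀ x, 1 ≤ lab x ∧ lab x ≤ Fintype.card V) ∧
      ∀ x y, ((if Even (I x) then (lab x : ℤ) else -(lab x : ℤ)) +
          (if Even (I (s x)) then -(lab (s x) : ℤ) else (lab (s x) : ℤ)) =
        (if Even (I y) then (lab y : ℤ) else -(lab y : ℤ)) +
          (if Even (I (s y)) then -(lab (s y) : ℤ) else (lab (s y) : ℤ))) → x = y := by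
  obtain ⟨lab, h1, h2, e0, e1, e2, hl, hS, hL⟩ :=
    label_exists t N J I hJ hI hinj hsurj hN3 hodd hmono
  refine ⟨lab, h1, h2, ?_⟩
  -- every vertex other than the exceptional one sees an edge of positive layer
  have big : ∀ x, I x + 1 < N (J x) → 2 * t + 2 ≤ lab x + lab (s x) := by
    intro x hx
    have hj := hJ x
    have h3 := hN3 _ hj
    have hpos : ∀ z, 1 ≤ I z → I z + 1 < N (J z) → 2 * t + 1 ≤ lab z := by
      intro z hz1 hz2
      obtain ⟨u, hu1, hu2⟩ := hsurj 0 (N 0 - 1) (by omega) (by have := hN3 0 (by omega); omega)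
      have hN0 := hN3 0 (by omega)
      have a := e1 u (by rw [hu1, hu2]; omega)
      have b := hl u z (by rw [hu1, hu2]; omega)
      rw [hu1] at a
      omega
    have hs := hsJ x
    have p1 := h2 x
    have p2 := h2 (s x)
    rcases hsI x with h | h
    · omega
    · by_cases h0 : I x = 0
      · have := hpos (s x) (by omega) (by rw [hs]; omega)
        omega
      · have := hpos x (by omega) hx
        omega
  -- sums of different levels are different
  have lvl : ∀ x y, I x + 1 < N (J x) → I y + 1 < N (J y) →
      min (I x) (N (J x) - 2 - I x) < min (I y) (N (J y) - 2 - I y) →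
      lab x + lab (s x) < lab y + lab (s y) := by
    intro x y hx hy hlt
    have sx : I (s x) = I x + 1 := by rcases hsI x with h | h <;> omega
    have sy : I (s y) = I y + 1 := by rcases hsI y with h | h <;> omega
    have jx := hsJ x
    have jy := hsJ y
    obtain ⟨p, hp⟩ := hodd _ (hJ x)
    obtain ⟨q, hq⟩ := hodd _ (hJ y)
    by_cases cx : 2 * (I x + 1) < N (J x) <;> by_cases cy : 2 * (I y + 1) < N (J y)
    · have l1 := hl x y (by omega)
      have l2 := hl (s x) (s y) (by rw [sx, sy, jx, jy]; omega)
      omega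
    · have l1 := hl x (s y) (by rw [sy, jy]; omega)
      have l2 := hl (s x) y (by rw [sx, jx]; omega)
      omega
    · have l1 := hl x (s y) (by rw [sy, jy]; omega)
      have l2 := hl (s x) y (by rw [sx, jx]; omega)
      omega
    · have l1 := hl x y (by omega)
      have l2 := hl (s x) (s y) (by rw [sx, sy, jx, jy]; omega)
      omega
  -- equal absolute sums of the same sign
  have main : ∀ x y, I x + 1 < N (J x) → I y + 1 < N (J y) → (Even (I x) ↔ Even (I y)) →
      lab x + lab (s x) = lab y + lab (s y) → ¬ J x < J y ∧ (J x = J y → I x = I y) := by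
    intro x y hx hy hpar hsum
    have hlev : min (I x) (N (J x) - 2 - I x) = min (I y) (N (J y) - 2 - I y) := by
      rcases lt_trichotomy (min (I x) (N (J x) - 2 - I x)) (min (I y) (N (J y) - 2 - I y))
        with h | h | h
      · have := lvl x y hx hy h
        omega
      · exact h
      · have := lvl y x hy hx h
        omega
    have sx : I (s x) = I x + 1 := by rcases hsI x with h | h <;> omega
    have sy : I (s y) = I y + 1 := by rcases hsI y with h | h <;> omega
    have jx := hsJ x
    have jy := hsJ y
    obtain ⟨p, hp⟩ := hodd _ (hJ x)
    obtain ⟨q, hq⟩ := hodd _ (hJ y)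
    have hpar' : I x % 2 = I y % 2 := by
      rw [Nat.even_iff, Nat.even_iff] at hpar; omega
    by_cases cx : 2 * (I x + 1) < N (J x) <;> by_cases cy : 2 * (I y + 1) < N (J y)
    · have hii : I x = I y := by omega
      refine ⟨fun hj => ?_, fun _ => hii⟩
      have S1 := hS x y hii (by omega) (by omega) hj
      have S2 := hS (s x) (s y) (by omega) (by rw [sx, jx]; omega) (by rw [sy, jy]; omega)
        (by omega)
      omega
    · exfalso; omega
    · exfalso; omega
    · refine ⟨fun hj => ?_, fun h => by rw [h] at hlev hx cx; omega⟩
      by_cases h0 : I x + 2 = N (J x)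
      · have z1 := e1 (s x) (by rw [sx, jx]; omega)
        have z2 := e1 (s y) (by rw [sy, jy]; omega)
        have z3 := e2 x (by omega)
        have z4 := e2 y (by omega)
        omega
      · have L1 := hL x y (by omega) (by omega) (by omega) (by omega) hj
        have L2 := hL (s x) (s y) (by rw [sx, sy, jx, jy]; omega) (by rw [sx, jx]; omega)
          (by rw [sx, jx]; omega) (by rw [sy, jy]; omega) (by omega)
        omega
  have main' : ∀ x y, I x + 1 < N (J x) → I y + 1 < N (J y) → (Even (I x) ↔ Even (I y)) →
      lab x + lab (s x) = lab y + lab (s y) → x = y := by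
    intro x y hx hy hpar hsum
    have m1 := main x y hx hy hpar hsum
    have m2 := main y x hy hx hpar.symm hsum.symm
    have : J x = J y := by omega
    exact hinj x y this (m1.2 this)
  have form : ∀ x, (I x + 1 = N (J x) ∧
      (if Even (I x) then (lab x : ℤ) else -(lab x : ℤ)) +
          (if Even (I (s x)) then -(lab (s x) : ℤ) else (lab (s x) : ℤ)) =
        2 * t - 4 * J x - 1) ∨
      (I x + 1 < N (J x) ∧ Even (I x) ∧
      (if Even (I x) then (lab x : ℤ) else -(lab x : ℤ)) +
          (if Even (I (s x)) then -(lab (s x) : ℤ) else (lab (s x) : ℤ)) =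
        lab x + lab (s x)) ∨
      (I x + 1 < N (J x) ∧ ¬ Even (I x) ∧
      (if Even (I x) then (lab x : ℤ) else -(lab x : ℤ)) +
          (if Even (I (s x)) then -(lab (s x) : ℤ) else (lab (s x) : ℤ)) =
        -(lab x + lab (s x))) := by
    intro x
    rcases hsI x with ⟨h, h'⟩ | ⟨h, h'⟩
    · left
      refine ⟨h, ?_⟩
      have hev : Even (I x) := by
        obtain ⟨p, hp⟩ := hodd _ (hJ x)
        rw [Nat.even_iff]; omega
      have hev' : Even (I (s x)) := by rw [h']; exact Even.zero
      rw [if_pos hev, if_pos hev']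
      have a := e1 x h
      have b := e0 (s x) h'
      rw [hsJ] at b
      omega
    · right
      by_cases hev : Even (I x)
      · left
        have hev' : ¬ Even (I (s x)) := by rw [h', Nat.even_add_one]; exact not_not.mpr hev
        rw [if_pos hev, if_neg hev']
        exact ⟨h, hev, rfl⟩
      · right
        have hev' : Even (I (s x)) := by rw [h', Nat.even_add_one]; exact hev
        rw [if_neg hev, if_pos hev']
        exact ⟨h, hev, by ring⟩
  intro x y hxy
  have jx := hJ x
  have jy := hJ y
  have bx := big x
  have b_y := big y
  rcases form x with ⟨a, b⟩ | ⟨a, a', b⟩ | ⟨a, a', b⟩ <;>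
    rcases form y with ⟨c, d⟩ | ⟨c, c', d⟩ | ⟨c, c', d⟩ <;> rw [b, d] at hxy
  · have hj : J x = J y := by omega
    apply hinj x y hj
    rw [hj] at a
    omega
  · omega
  · omega
  · omega
  · exact main' x y a c (iff_of_true a' c') (by omega)
  · omega
  · omega
  · omega
  · exact main' x y a c (iff_of_false a' c') (by omega)

theorem orientation_of_labels {V : Type*} [Fintype V] [DecidableEq V]
    (G : SimpleGraph V) [DecidableRel G.Adj]
    (hreg : ∀ v : V, G.degree v = 2) (s : V → V) (hs : Function.Bijective s)
    (hadj : ∀ x y, G.Adj x y ↔ (y = s x ∨ x = s y)) (hss : ∀ x, s (s x) ≠ x)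
    (E : V → Prop) [DecidablePred E] (lab : V → ℕ) (hlab : Function.Injective lab)
    (hrange : ∀ x, 1 ≤ lab x ∧ lab x ≤ Fintype.card V)
    (hdist : ∀ x y, ((if E x then (lab x : ℤ) else -(lab x : ℤ)) +
          (if E (s x) then -(lab (s x) : ℤ) else (lab (s x) : ℤ)) =
        (if E y then (lab y : ℤ) else -(lab y : ℤ)) +
          (if E (s y) then -(lab (s y) : ℤ) else (lab (s y) : ℤ))) → x = y) :
    ∃ (A : Finset (V × V)) (c : V × V → ℤ),
      IsOrientation G A ∧
      Set.BijOn c ↑A (Set.Icc 1 (G.edgeFinset.card : ℤ)) ∧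
      (Pairwise fun u v : V => vertexSum A c u ≠ vertexSum A c v) ∧
      (∀ u : V, vertexSum A c u ≠ 0) ∧
      (∀ u : V, |vertexSum A c u| ≤ 2 * (G.edgeFinset.card : ℤ) - 1) := by
  have hm : G.edgeFinset.card = Fintype.card V := by
    have h := G.sum_degrees_eq_twice_card_edges
    simp only [hreg, Finset.sum_const, Finset.card_univ, smul_eq_mul] at h
    omega
  rw [hm]
  have hne : ∀ x, s x ≠ x := by
    intro x h
    have : G.Adj x x := (hadj x x).2 (Or.inl h.symm)
    exact G.loopless.irrefl x this
  obtain ⟨arc, harc⟩ : ∃ arc : V → V × V, ∀ x, arc x = if E x then (x, s x) else (s x, x) :=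
    ⟨_, fun _ => rfl⟩
  have harc_inj : Function.Injective arc := by
    intro x y h
    rw [harc, harc] at h
    have a1 := hss x
    have a2 := hss y
    split_ifs at h <;> simp only [Prod.mk.injEq] at h
    · exact h.1
    · exact absurd (by rw [← h.1, h.2]) a2
    · exact absurd (by rw [h.1, ← h.2]) a1
    · exact h.2
  obtain ⟨c, hc⟩ : ∃ c : V × V → ℤ, ∀ a, c a = if a.2 = s a.1 then (lab a.1 : ℤ) else lab a.2 :=
    ⟨_, fun _ => rfl⟩
  have hca : ∀ x, c (arc x) = lab x := by
    intro x
    rw [hc, harc]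
    split_ifs with h1 h2 h2
    · rfl
    · exact absurd rfl h2
    · exact absurd h2.symm (hss x)
    · rfl
  have hmem : ∀ a b, (a, b) ∈ univ.image arc ↔ (E a ∧ b = s a) ∨ (¬ E b ∧ a = s b) := by
    intro a b
    simp only [Finset.mem_image, Finset.mem_univ, true_and]
    constructor
    · rintro ⟨x, hx⟩
      rw [harc] at hx
      split_ifs at hx with h <;> simp only [Prod.mk.injEq] at hx
      · left; rw [← hx.1, ← hx.2]; exact ⟨h, rfl⟩
      · right; rw [← hx.1, ← hx.2]; exact ⟨h, rfl⟩
    · rintro (⟨h, rfl⟩ | ⟨h, rfl⟩)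
      · exact ⟨a, by rw [harc, if_pos h]⟩
      · exact ⟨b, by rw [harc, if_neg h]⟩
  have hvs : ∀ y, vertexSum (univ.image arc) c (s y) = (if E y then (lab y : ℤ) else -(lab y : ℤ)) +
          (if E (s y) then -(lab (s y) : ℤ) else (lab (s y) : ℤ)) := by
    intro y
    unfold vertexSum
    rw [Finset.sum_filter, Finset.sum_filter, Finset.sum_image (fun a _ b _ h => harc_inj h),
      Finset.sum_image (fun a _ b _ h => harc_inj h), ← Finset.sum_sub_distrib]
    rw [Fintype.sum_eq_add y (s y) (hne y).symm]
    · simp only [hca]; simp only [harc]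
      have a1 := hne y
      have a2 := hne (s y)
      by_cases h1 : E y <;> by_cases h2 : E (s y) <;> simp [h1, h2, a1, a2, a1.symm]
    · intro x hx
      have a1 : s x ≠ s y := fun h => hx.1 (hs.1 h)
      simp only [hca]; simp only [harc]
      by_cases h1 : E x <;> simp [h1, a1, hx.2]
  refine ⟨univ.image arc, c, ⟨?_, ?_⟩, ⟨?_, ?_, ?_⟩, ?_, ?_, ?_⟩
  · intro u v
    rw [hadj, hmem, hmem]
    tauto
  · intro u v ⟨h1, h2⟩
    rw [hmem] at h1 h2
    rcases h1 with ⟨a, b⟩ | ⟨a, b⟩ <;> rcases h2 with ⟨a', b'⟩ | ⟨a', b'⟩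
    · exact hss u (by rw [← b, ← b'])
    · exact a' a
    · exact a a'
    · exact hss u (by rw [← b', ← b])
  · intro a ha
    obtain ⟨x, -, rfl⟩ := Finset.mem_image.1 (Finset.mem_coe.1 ha)
    rw [hca]
    have := hrange x
    constructor <;> omega
  · intro a ha b hb h
    obtain ⟨x, -, rfl⟩ := Finset.mem_image.1 (Finset.mem_coe.1 ha)
    obtain ⟨y, -, rfl⟩ := Finset.mem_image.1 (Finset.mem_coe.1 hb)
    rw [hca, hca] at h
    have hxy : x = y := hlab (by exact_mod_cast h)
    rw [hxy]
  · intro k hk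
    have himg : univ.image lab = Finset.Icc 1 (Fintype.card V) := by
      apply Finset.eq_of_subset_of_card_le
      · intro z hz
        obtain ⟨x, -, rfl⟩ := Finset.mem_image.1 hz
        exact Finset.mem_Icc.2 (hrange x)
      · rw [Finset.card_image_of_injective _ hlab]; simp
    have : k.toNat ∈ univ.image lab := by
      rw [himg, Finset.mem_Icc]
      have := hk.1
      have := hk.2
      omega
    obtain ⟨x, -, hx⟩ := Finset.mem_image.1 this
    refine ⟨arc x, by simp, ?_⟩
    rw [hca, hx]
    have := hk.1
    omega
  · intro u v huv h
    obtain ⟨x, rfl⟩ := hs.2 u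
    obtain ⟨y, rfl⟩ := hs.2 v
    simp only [hvs] at h
    exact huv (by rw [hdist x y h])
  · intro u
    obtain ⟨x, rfl⟩ := hs.2 u
    rw [hvs]
    have a1 : lab x ≠ lab (s x) := fun h => hne x (hlab h).symm
    have a2 := hrange x
    have a3 := hrange (s x)
    split_ifs <;> omega
  · intro u
    obtain ⟨x, rfl⟩ := hs.2 u
    rw [hvs]
    have a1 : lab x ≠ lab (s x) := fun h => hne x (hlab h).symm
    have a2 := hrange x
    have a3 := hrange (s x)
    rw [abs_le]
    split_ifs <;> constructor <;> omega

theorem cycle_param {V : Type*} [Fintype V] [DecidableEq V]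
    (G : SimpleGraph V) [DecidableRel G.Adj]
    (hreg : ∀ v : V, G.degree v = 2) (C : G.ConnectedComponent) :
    ∃ p : ℕ → V, 3 ≤ C.supp.ncard ∧ Set.InjOn p {i | i < C.supp.ncard} ∧
      (∀ i, G.Adj (p i) (p (i + 1)) ∨ C.supp.ncard ≤ i) ∧
      p C.supp.ncard = p 0 ∧ (∀ i, p i ∈ C.supp) ∧
      ∀ x ∈ C.supp, ∃ i, i < C.supp.ncard ∧ p i = x := by
  classical
  have hcyc : G.IsCycles := by
    intro v _
    rw [← hreg v, ← G.card_neighborFinset_eq_degree, Set.ncard_eq_toFinset_card']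
    rfl
  obtain ⟨v, hv⟩ := C.nonempty_supp
  have hn : (G.neighborSet v).Nonempty := by
    have : 0 < G.degree v := by rw [hreg]; norm_num
    obtain ⟨w, hw⟩ := (G.degree_pos_iff_exists_adj v).1 this
    exact ⟨w, hw⟩
  obtain ⟨p, hp, hsupp⟩ := hcyc.exists_cycle_toSubgraph_verts_eq_connectedComponentSupp hv hn
  have h3 := hp.three_le_length
  have hinj : Set.InjOn p.getVert {i | i < p.length} := by
    intro a ha b hb h
    simp only [Set.mem_ofPred_eq] at ha hb
    exact hp.getVert_injOn' (by simp only [Set.mem_ofPred_eq]; omega)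
      (by simp only [Set.mem_ofPred_eq]; omega) h
  have hall : ∀ i, p.getVert i ∈ C.supp := by
    intro i
    rw [← hsupp, SimpleGraph.Walk.mem_verts_toSubgraph]
    exact p.getVert_mem_support i
  have hcov : ∀ x ∈ C.supp, ∃ i, i < p.length ∧ p.getVert i = x := by
    intro x hx
    rw [← hsupp, SimpleGraph.Walk.mem_verts_toSubgraph,
      SimpleGraph.Walk.mem_support_iff_exists_getVert] at hx
    obtain ⟨i, hi, hle⟩ := hx
    rcases hle.lt_or_eq with h | h
    · exact ⟨i, h, hi⟩
    · refine ⟨0, by omega, ?_⟩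
      rw [h, p.getVert_length] at hi
      rw [p.getVert_zero, hi]
  have hlen : C.supp.ncard = p.length := by
    have : C.supp = p.getVert '' {i | i < p.length} := by
      ext x
      constructor
      · intro hx
        obtain ⟨i, h1, h2⟩ := hcov x hx
        exact ⟨i, h1, h2⟩
      · rintro ⟨i, -, rfl⟩
        exact hall i
    rw [this, Set.InjOn.ncard_image hinj]
    have : {i | i < p.length} = ((Finset.range p.length : Finset ℕ) : Set ℕ) := by
      ext; simp
    rw [this, Set.ncard_coe_finset, Finset.card_range]
  rw [hlen]
  refine ⟨p.getVert, h3, hinj, ?_, ?_, hall, hcov⟩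
  · intro i
    by_cases h : i < p.length
    · exact Or.inl (p.adj_getVert_succ h)
    · exact Or.inr (by omega)
  · rw [p.getVert_length, p.getVert_zero]

theorem disjoint_union_odd_cycles_antimagic_orientation_bounded
    {V : Type*} [Fintype V] [DecidableEq V]
    (G : SimpleGraph V) [DecidableRel G.Adj]
    (hreg : ∀ v : V, G.degree v = 2)
    (hodd : ∀ c : G.ConnectedComponent, Odd c.supp.ncard) :
    ∃ (A : Finset (V × V)) (c : V × V → ℤ),
      IsOrientation G A ∧
      Set.BijOn c ↑A (Set.Icc 1 (G.edgeFinset.card : ℤ)) ∧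
      (Pairwise fun u v : V => vertexSum A c u ≠ vertexSum A c v) ∧
      (∀ u : V, vertexSum A c u ≠ 0) ∧
      (∀ u : V, |vertexSum A c u| ≤ 2 * (G.edgeFinset.card : ℤ) - 1) := by
  classical
  choose p h3 hinj hpadj hper hpmem hcov using cycle_param G hreg
  -- number the components by increasing size
  obtain ⟨t, e, he⟩ : ∃ (t : ℕ) (e : G.ConnectedComponent ≃ Fin t),
      Monotone (fun j => (e.symm j).supp.ncard) := by
    let e0 := Fintype.equivFin G.ConnectedComponent
    let f : Fin (Fintype.card G.ConnectedComponent) → ℕ := fun j => (e0.symm j).supp.ncard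
    refine ⟨_, e0.trans (Tuple.sort f).symm, ?_⟩
    exact Tuple.monotone_sort f
  have hx : ∀ x : V, ∃ i, i < (G.connectedComponentMk x).supp.ncard ∧
      p (G.connectedComponentMk x) i = x := fun x => hcov _ x (by simp)
  choose I hI hpI using hx
  obtain ⟨N, hN⟩ : ∃ N : ℕ → ℕ, ∀ j : Fin t, N j = (e.symm j).supp.ncard :=
    ⟨fun j => if h : j < t then (e.symm ⟨j, h⟩).supp.ncard else 0, fun j => by simp⟩
  obtain ⟨J, hJ⟩ : ∃ J : V → ℕ, ∀ x, J x = e (G.connectedComponentMk x) := ⟨_, fun _ => rfl⟩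
  have hNJ : ∀ x, N (J x) = (G.connectedComponentMk x).supp.ncard := by
    intro x; rw [hJ, hN]; simp
  have hmk : ∀ C i, G.connectedComponentMk (p C i) = C := fun C i => hpmem C i
  have hIp : ∀ C i, i < C.supp.ncard → I (p C i) = i := by
    intro C i hi
    have a := hI (p C i)
    have b := hpI (p C i)
    rw [hmk] at a b
    exact hinj C a hi b
  obtain ⟨s, hs⟩ : ∃ s : V → V, ∀ x, s x = p (G.connectedComponentMk x) (I x + 1) :=
    ⟨_, fun _ => rfl⟩
  have hsmk : ∀ x, G.connectedComponentMk (s x) = G.connectedComponentMk x := by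
    intro x; rw [hs, hmk]
  have hsJ : ∀ x, J (s x) = J x := by intro x; rw [hJ, hJ, hsmk]
  have hsI : ∀ x, (I x + 1 = N (J x) ∧ I (s x) = 0) ∨
      (I x + 1 < N (J x) ∧ I (s x) = I x + 1) := by
    intro x
    rw [hNJ]
    rcases (Nat.succ_le_of_lt (hI x)).lt_or_eq with h | h
    · right
      exact ⟨h, by rw [hs, hIp _ _ h]⟩
    · left
      refine ⟨h, ?_⟩
      have h' : I x + 1 = (G.connectedComponentMk x).supp.ncard := h
      rw [hs, h', hper, hIp]
      have := h3 (G.connectedComponentMk x)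
      omega
  have hJI : ∀ x y, J x = J y → I x = I y → x = y := by
    intro x y h1 h2
    rw [hJ, hJ] at h1
    have h1' : G.connectedComponentMk x = G.connectedComponentMk y :=
      e.injective (Fin.ext h1)
    rw [← hpI x, ← hpI y, h1', h2]
  have hN3 : ∀ j, j < t → 3 ≤ N j := by
    intro j hj
    have := hN ⟨j, hj⟩
    simp only at this
    rw [this]
    exact h3 _
  have hsinj : Function.Injective s := by
    intro x y h
    have hj : J x = J y := by rw [← hsJ x, ← hsJ y, h]
    apply hJI x y hj
    have a := hsI x
    have b := hsI y
    rw [← h, ← hj] at b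
    omega
  have hsbij : Function.Bijective s := Finite.injective_iff_bijective.1 hsinj
  have hJt : ∀ x, J x < t := by intro x; rw [hJ]; exact (e _).isLt
  have hss : ∀ x, s (s x) ≠ x := by
    intro x h
    have a := hsI x
    have b := hsI (s x)
    rw [h, hsJ] at b
    have := hN3 _ (hJt x)
    omega
  have hadj1 : ∀ x, G.Adj x (s x) := by
    intro x
    rcases hpadj (G.connectedComponentMk x) (I x) with h | h
    · rw [hpI, ← hs] at h
      exact h
    · exact absurd (hI x) (not_lt.mpr h)
  have hadj : ∀ x y, G.Adj x y ↔ (y = s x ∨ x = s y) := by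
    intro x y
    constructor
    · intro h
      obtain ⟨z, rfl⟩ := hsbij.2 x
      have hsub : ({z, s (s z)} : Finset V) ⊆ G.neighborFinset (s z) := by
        intro w hw
        rw [SimpleGraph.mem_neighborFinset]
        simp only [Finset.mem_insert, Finset.mem_singleton] at hw
        rcases hw with rfl | rfl
        · exact (hadj1 w).symm
        · exact hadj1 _
      have heq := Finset.eq_of_subset_of_card_le hsub (by
        rw [SimpleGraph.card_neighborFinset_eq_degree, hreg, Finset.card_pair (hss z).symm])
      have : y ∈ G.neighborFinset (s z) := by rwa [SimpleGraph.mem_neighborFinset]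
      rw [← heq] at this
      simp only [Finset.mem_insert, Finset.mem_singleton] at this
      rcases this with rfl | h
      · right; rfl
      · left; exact h
    · rintro (rfl | rfl)
      · exact hadj1 x
      · exact (hadj1 y).symm
  obtain ⟨lab, l1, l2, l3⟩ := signed_distinct t N J I s hJt (fun x => by rw [hNJ]; exact hI x) hJI
    (by
      intro j i hj hi
      have hNj : N j = (e.symm ⟨j, hj⟩).supp.ncard := hN ⟨j, hj⟩
      refine ⟨p (e.symm ⟨j, hj⟩) i, ?_, hIp _ _ (by rw [← hNj]; exact hi)⟩
      rw [hJ, hmk]; simp) hN3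
    (by
      intro j hj
      have hNj : N j = (e.symm ⟨j, hj⟩).supp.ncard := hN ⟨j, hj⟩
      rw [hNj]; exact hodd _)
    (by
      intro i j hij hj
      have hNj : N j = (e.symm ⟨j, hj⟩).supp.ncard := hN ⟨j, hj⟩
      have hNi : N i = (e.symm ⟨i, by omega⟩).supp.ncard := hN ⟨i, by omega⟩
      rw [hNi, hNj]
      exact he (Fin.mk_le_mk.2 hij)) hsJ hsI
  exact orientation_of_labels G hreg s hsbij hadj hss (fun x => Even (I x)) lab l1 l2 l3
end

section
/- Let G be a finite simple graph with m edges that is a disjoint union of even cycles, and let k ≥ 0 be an integer. Then there exist an orientation D of G and a bijection c from the arc set of D to {k + 1, k + 2, …, k + m} such that the vertex-sums of all vertices of D under c are pairwise distinct and every vertex-sum has absolute value at least 2k + 3. -/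
open Finset

/-- Each component of a 2-regular graph with even components is an even cycle. -/
lemma comp_cycle {V : Type*} [Fintype V] [DecidableEq V]
    (G : SimpleGraph V) [DecidableRel G.Adj]
    (hreg : ∀ v : V, G.degree v = 2)
    (heven : ∀ c : G.ConnectedComponent, Even c.supp.ncard) (C : G.ConnectedComponent) :
    ∃ (L : ℕ) (X : ℕ → V), 4 ≤ L ∧ Even L ∧ (∀ i j, i < L → j < L → X i = X j → i = j) ∧
      (∀ i, i + 1 < L → G.Adj (X i) (X (i + 1))) ∧ G.Adj (X (L - 1)) (X 0) ∧
      (∀ v, G.connectedComponentMk v = C ↔ ∃ i, i < L ∧ X i = v) := by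
  have hcyc : G.IsCycles := by
    intro v _
    have := hreg v
    rw [← SimpleGraph.card_neighborSet_eq_degree] at this
    rw [← Nat.card_coe_set_eq, Nat.card_eq_fintype_card]
    exact this
  obtain ⟨v, rfl⟩ := C.exists_rep
  have hn : (G.neighborSet v).Nonempty := by
    have : 0 < G.degree v := by rw [hreg]; norm_num
    rw [SimpleGraph.degree_pos_iff_exists_adj] at this
    exact this
  obtain ⟨p, hp, hs⟩ := hcyc.exists_cycle_toSubgraph_verts_eq_connectedComponentSupp
    (c := G.connectedComponentMk v) (v := v) rfl hn
  have h3 := hp.three_le_length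
  have hinj : ∀ i j, i < p.length → j < p.length → p.getVert i = p.getVert j → i = j := by
    intro i j hi hj hij
    exact hp.getVert_injOn' (by simp; omega) (by simp; omega) hij
  have hmem : ∀ w, G.connectedComponentMk w = G.connectedComponentMk v ↔
      ∃ i, i < p.length ∧ p.getVert i = w := by
    intro w
    have h1 : w ∈ p.toSubgraph.verts ↔ w ∈ (G.connectedComponentMk v).supp := by rw [hs]
    rw [SimpleGraph.Walk.mem_verts_toSubgraph, SimpleGraph.ConnectedComponent.mem_supp_iff,
      SimpleGraph.Walk.mem_support_iff_exists_getVert] at h1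
    rw [← h1]
    constructor
    · rintro ⟨i, hi, hl⟩
      rcases Nat.lt_or_ge i p.length with h | h
      · exact ⟨i, h, hi⟩
      · refine ⟨0, by omega, ?_⟩
        have : i = p.length := by omega
        subst this
        simpa using hi
    · rintro ⟨i, hi, hl⟩
      exact ⟨i, hl, hi.le⟩
  have hcard : (G.connectedComponentMk v).supp.ncard = p.length := by
    have : (G.connectedComponentMk v).supp = ((Finset.range p.length).image p.getVert : Finset V) := by
      ext w
      rw [SimpleGraph.ConnectedComponent.mem_supp_iff, hmem]
      simp
    rw [this, Set.ncard_coe_finset, Finset.card_image_of_injOn, Finset.card_range]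
    intro i hi j hj hij
    simp at hi hj
    exact hinj i j hi hj hij
  have hev := heven (G.connectedComponentMk v)
  rw [hcard] at hev
  refine ⟨p.length, p.getVert, ?_, hev, hinj, ?_, ?_, hmem⟩
  · rcases hev with ⟨r, hr⟩; omega
  · intro i hi
    exact p.adj_getVert_succ (by omega)
  · have := p.adj_getVert_succ (i := p.length - 1) (by omega)
    rw [show p.length - 1 + 1 = p.length by omega] at this
    simpa using this

/-- The construction from a cyclic successor function, a 2-coloring and suitable labels. -/
lemma main_of_data {V : Type*} [Fintype V] [DecidableEq V]
    (G : SimpleGraph V) [DecidableRel G.Adj]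
    (hreg : ∀ v : V, G.degree v = 2) (k : ℕ)
    (s t : V → V) (P : V → Prop) (l : V → ℤ)
    (hst : ∀ v, s (t v) = v) (hts : ∀ v, t (s v) = v) (hne : ∀ v, s v ≠ t v)
    (hadj : ∀ v, G.Adj v (s v)) (hP : ∀ v, P (s v) ↔ ¬ P v)
    (hinj : Function.Injective l)
    (hlb : ∀ v, (k : ℤ) + 1 ≤ l v) (hub : ∀ v, l v ≤ k + Fintype.card V)
    (hdist : ∀ u v, (P u ↔ P v) → l u + l (t u) = l v + l (t v) → u = v) :
    ∃ (A : Finset (V × V)) (c : V × V → ℤ),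
      IsOrientation G A ∧
      Set.BijOn c ↑A (Set.Icc ((k : ℤ) + 1) ((k : ℤ) + (G.edgeFinset.card : ℤ))) ∧
      (Pairwise fun u v : V => vertexSum A c u ≠ vertexSum A c v) ∧
      (∀ u : V, 2 * (k : ℤ) + 3 ≤ |vertexSum A c u|) := by
  classical
  have hcard : G.edgeFinset.card = Fintype.card V := by
    have := G.sum_degrees_eq_twice_card_edges
    simp [hreg] at this
    omega
  have hadjt : ∀ v, G.Adj v (t v) := fun v => by
    have := hadj (t v); rw [hst] at this; exact this.symm
  have hN : ∀ v w, G.Adj v w ↔ w = s v ∨ w = t v := by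
    intro v w
    have h1 : ({s v, t v} : Finset V) = G.neighborFinset v := by
      apply Finset.eq_of_subset_of_card_le
      · intro x hx
        simp at hx
        rcases hx with rfl | rfl
        · simpa using hadj v
        · simpa using hadjt v
      · rw [SimpleGraph.card_neighborFinset_eq_degree, hreg, Finset.card_pair (hne v)]
    rw [← SimpleGraph.mem_neighborFinset, ← h1]; simp
  have hPt : ∀ v, P (t v) ↔ ¬ P v := by
    intro v; have := hP (t v); rw [hst] at this; tauto
  have hPadj : ∀ u v, G.Adj u v → (P v ↔ ¬ P u) := by
    intro u v h
    rcases (hN u v).1 h with rfl | rfl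
    · exact hP u
    · exact hPt u
  set A : Finset (V × V) := Finset.univ.filter (fun a => G.Adj a.1 a.2 ∧ P a.1) with hA
  have mA : ∀ u v, (u, v) ∈ A ↔ G.Adj u v ∧ P u := by intro u v; simp [hA]
  set c : V × V → ℤ := fun a => if a.2 = s a.1 then l a.1 else l a.2 with hc
  have c1 : ∀ u, c (u, s u) = l u := by intro u; simp [hc]
  have c2 : ∀ u, c (s u, u) = l u := by
    intro u
    have : u ≠ s (s u) := by
      intro h
      apply hne (s u)
      rw [hts]; exact h.symm
    simp [hc, this]
  have c3 : ∀ u, c (u, t u) = l (t u) := by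
    intro u; have := c2 (t u); rwa [hst] at this
  have c4 : ∀ u, c (t u, u) = l (t u) := by
    intro u; have := c1 (t u); rwa [hst] at this
  have vsP : ∀ u, P u → vertexSum A c u = -(l u + l (t u)) := by
    intro u hu
    have e1 : A.filter (fun a => a.2 = u) = ∅ := by
      ext ⟨a, b⟩
      simp only [Finset.mem_filter, mA]
      constructor
      · rintro ⟨⟨h, ha⟩, rfl⟩
        exact absurd ha ((hPadj _ _ h).1 hu)
      · simp
    have e2 : A.filter (fun a => a.1 = u) = {(u, s u), (u, t u)} := by
      ext ⟨a, b⟩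
      simp only [Finset.mem_filter, mA, Finset.mem_insert, Finset.mem_singleton, Prod.mk.injEq, hN]
      constructor
      · rintro ⟨⟨h, ha⟩, rfl⟩
        tauto
      · rintro (⟨rfl, rfl⟩ | ⟨rfl, rfl⟩) <;> tauto
    unfold vertexSum
    rw [e1, e2, Finset.sum_pair (by simp [hne]), c1, c3]
    simp
  have vsN : ∀ u, ¬ P u → vertexSum A c u = l u + l (t u) := by
    intro u hu
    have e1 : A.filter (fun a => a.1 = u) = ∅ := by
      ext ⟨a, b⟩
      simp only [Finset.mem_filter, mA]
      constructor
      · rintro ⟨⟨h, ha⟩, rfl⟩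
        exact absurd ha hu
      · simp
    have e2 : A.filter (fun a => a.2 = u) = {(s u, u), (t u, u)} := by
      ext ⟨a, b⟩
      simp only [Finset.mem_filter, mA, Finset.mem_insert, Finset.mem_singleton, Prod.mk.injEq]
      constructor
      · rintro ⟨⟨h, ha⟩, rfl⟩
        have := (hN _ _).1 h.symm
        tauto
      · rintro (⟨rfl, rfl⟩ | ⟨rfl, rfl⟩)
        · exact ⟨⟨(hadj _).symm, (hP _).2 hu⟩, rfl⟩
        · exact ⟨⟨(hadjt _).symm, (hPt _).2 hu⟩, rfl⟩
    unfold vertexSum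
    rw [e1, e2, Finset.sum_pair (by simp [hne]), c2, c4]
    simp
  have hsum : ∀ u, 2 * (k : ℤ) + 3 ≤ l u + l (t u) := by
    intro u
    have h1 := hlb u
    have h2 := hlb (t u)
    have h3 : l u ≠ l (t u) := fun h => (hadjt u).ne (hinj h)
    omega
  -- every arc comes from a vertex
  have hform : ∀ a ∈ A, ∃ w, c a = l w ∧ a = if P w then (w, s w) else (s w, w) := by
    rintro ⟨a, b⟩ hab
    rw [mA] at hab
    rcases (hN _ _).1 hab.1 with rfl | rfl
    · exact ⟨a, c1 a, by simp [hab.2]⟩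
    · refine ⟨t a, c3 a, ?_⟩
      have : ¬ P (t a) := fun h => (hPt a).1 h hab.2
      simp [this, hst]
  refine ⟨A, c, ⟨?_, ?_⟩, ⟨?_, ?_, ?_⟩, ?_, ?_⟩
  · intro u v
    rw [mA, mA, G.adj_comm v u]
    constructor
    · intro h
      have := hPadj u v h
      tauto
    · tauto
  · intro u v
    rw [mA, mA]
    rintro ⟨⟨h, hu⟩, -, hv⟩
    exact (hPadj u v h).1 hv hu
  · intro a ha
    obtain ⟨w, hw, -⟩ := hform a ha
    rw [hw, hcard]
    exact ⟨hlb w, hub w⟩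
  · intro a ha b hb hab
    obtain ⟨w, hw, ha'⟩ := hform a ha
    obtain ⟨x, hx, hb'⟩ := hform b hb
    rw [hw, hx] at hab
    have := hinj hab
    subst this
    rw [ha', hb']
  · intro z hz
    rw [hcard] at hz
    have himg : Finset.univ.image l = Finset.Icc ((k : ℤ) + 1) (k + Fintype.card V) := by
      apply Finset.eq_of_subset_of_card_le
      · intro y hy
        simp only [Finset.mem_image, Finset.mem_univ, true_and] at hy
        obtain ⟨v, rfl⟩ := hy
        exact Finset.mem_Icc.2 ⟨hlb v, hub v⟩
      · rw [Finset.card_image_of_injective _ hinj]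
        simp
    have : z ∈ Finset.univ.image l := by rw [himg]; exact Finset.mem_Icc.2 hz
    simp only [Finset.mem_image, Finset.mem_univ, true_and] at this
    obtain ⟨w, rfl⟩ := this
    by_cases hw : P w
    · exact ⟨(w, s w), (mA _ _).2 ⟨hadj w, hw⟩, c1 w⟩
    · exact ⟨(s w, w), (mA _ _).2 ⟨(hadj w).symm, (hP w).2 hw⟩, c2 w⟩
  · intro u v huv h
    have h1 := hsum u
    have h2 := hsum v
    by_cases hu : P u <;> by_cases hv : P v
    · rw [vsP u hu, vsP v hv] at h
      exact huv (hdist u v (by tauto) (by omega))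
    · rw [vsP u hu, vsN v hv] at h; omega
    · rw [vsN u hu, vsP v hv] at h; omega
    · rw [vsN u hu, vsN v hv] at h
      exact huv (hdist u v (by tauto) (by omega))
  · intro u
    have h1 := hsum u
    by_cases hu : P u
    · rw [vsP u hu, abs_neg]; exact h1.trans (le_abs_self _)
    · rw [vsN u hu]; exact h1.trans (le_abs_self _)

/-- Offsets placing intervals of prescribed lengths next to each other. -/
lemma exists_offset {I : Type*} [Fintype I] (L : I → ℕ) :
    ∃ a : I → ℕ, (∀ i, a i + L i ≤ ∑ j, L j) ∧
      ∀ i j, i ≠ j → a i + L i ≤ a j ∨ a j + L j ≤ a i := by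
  classical
  let e := Fintype.equivFin I
  let a : I → ℕ := fun i => ∑ j ∈ Finset.univ.filter (fun j => e j < e i), L j
  have key : ∀ i, a i + L i = ∑ j ∈ insert i (Finset.univ.filter (fun j => e j < e i)), L j := by
    intro i
    rw [Finset.sum_insert (by simp), add_comm]
  have key2 : ∀ i j, e i < e j → a i + L i ≤ a j := by
    intro i j h
    rw [key]
    apply Finset.sum_le_sum_of_subset
    intro x hx
    simp only [Finset.mem_insert, Finset.mem_filter, Finset.mem_univ, true_and] at hx ⊢
    rcases hx with rfl | hx
    · exact h
    · exact hx.trans h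
  refine ⟨a, fun i => ?_, fun i j hij => ?_⟩
  · rw [key]; exact Finset.sum_le_sum_of_subset (Finset.subset_univ _)
  · rcases lt_trichotomy (e i) (e j) with h | h | h
    · exact Or.inl (key2 _ _ h)
    · exact absurd (e.injective h) hij
    · exact Or.inr (key2 _ _ h)

/-- Within a cycle of length `L`: labels in order with the last two swapped. -/
def swapLast (L i : ℕ) : ℕ := if i + 2 = L then L - 1 else if i + 1 = L then L - 2 else i

/-- Cyclic predecessor. -/
def prevIdx (L i : ℕ) : ℕ := if i = 0 then L - 1 else i - 1

/-- Cyclic successor. -/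
def nextIdx (L i : ℕ) : ℕ := if i + 1 = L then 0 else i + 1

/-- Closed form for the label sums around a cycle. -/
lemma swapLast_sum (M i : ℕ) (hM : 4 ≤ M) (hi : i < M) :
    (i = 0 ∧ swapLast M i + swapLast M (prevIdx M i) = M - 2) ∨
    (i + 1 = M ∧ swapLast M i + swapLast M (prevIdx M i) = 2 * M - 3) ∨
    (i + 2 = M ∧ swapLast M i + swapLast M (prevIdx M i) = 2 * M - 4) ∨
    (0 < i ∧ i + 2 < M ∧ swapLast M i + swapLast M (prevIdx M i) = 2 * i - 1) := by
  by_cases h0 : i = 0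
  · subst h0
    left
    refine ⟨rfl, ?_⟩
    have e1 : swapLast M 0 = 0 := by
      unfold swapLast
      rw [if_neg (by omega), if_neg (by omega)]
    have e2 : swapLast M (prevIdx M 0) = M - 2 := by
      have : prevIdx M 0 = M - 1 := rfl
      rw [this]
      unfold swapLast
      rw [if_neg (by omega), if_pos (by omega)]
    rw [e1, e2, zero_add]
  · right
    simp only [prevIdx, swapLast, if_neg h0]
    split_ifs <;> omega

lemma next_prev (M i : ℕ) (hM : 4 ≤ M) (hi : i < M) : nextIdx M (prevIdx M i) = i := by
  by_cases h0 : i = 0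
  · subst h0
    simp only [prevIdx, nextIdx, if_true]
    split_ifs <;> omega
  · simp only [prevIdx, nextIdx, if_neg h0]
    split_ifs <;> omega

lemma prev_next (M i : ℕ) (hi : i < M) : prevIdx M (nextIdx M i) = i := by
  by_cases h0 : i + 1 = M
  · simp only [prevIdx, nextIdx, if_pos h0, if_true]
    omega
  · simp [prevIdx, nextIdx, if_neg h0]

theorem disjoint_union_even_cycles_shifted_labeling
    {V : Type*} [Fintype V] [DecidableEq V]
    (G : SimpleGraph V) [DecidableRel G.Adj]
    (hreg : ∀ v : V, G.degree v = 2)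
    (heven : ∀ c : G.ConnectedComponent, Even c.supp.ncard)
    (k : ℕ) :
    ∃ (A : Finset (V × V)) (c : V × V → ℤ),
      IsOrientation G A ∧
      Set.BijOn c ↑A (Set.Icc ((k : ℤ) + 1) ((k : ℤ) + (G.edgeFinset.card : ℤ))) ∧
      (Pairwise fun u v : V => vertexSum A c u ≠ vertexSum A c v) ∧
      (∀ u : V, 2 * (k : ℤ) + 3 ≤ |vertexSum A c u|) := by
  classical
  choose L X hL4 hLe hXinj hXadj hXlast hXmem using comp_cycle G hreg heven
  obtain ⟨a, ha1, ha2⟩ := exists_offset L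
  let K : V → G.ConnectedComponent := G.connectedComponentMk
  have hpos : ∀ v, ∃ i, i < L (K v) ∧ X (K v) i = v := fun v => (hXmem (K v) v).1 rfl
  choose pos hposlt hXpos using hpos
  have hKX : ∀ C i, i < L C → K (X C i) = C := fun C i hi => (hXmem C _).2 ⟨i, hi, rfl⟩
  have hposX : ∀ C i, i < L C → pos (X C i) = i := by
    intro C i hi
    have h1 := hposlt (X C i)
    have h2 := hXpos (X C i)
    rw [hKX C i hi] at h1 h2
    exact hXinj C _ _ h1 hi h2
  have hext : ∀ u v, K u = K v → pos u = pos v → u = v := by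
    intro u v h1 h2
    rw [← hXpos u, ← hXpos v, h1, h2]
  have hsumL : ∑ C, L C = Fintype.card V := by
    have : ∀ C, L C = (Finset.univ.filter (fun v => K v = C)).card := by
      intro C
      rw [← Finset.card_range (L C)]
      apply Finset.card_bij (fun i _ => X C i)
      · intro i hi
        simp at hi
        simpa using hKX C i hi
      · intro i hi j hj h
        simp at hi hj
        exact hXinj C i j hi hj h
      · intro v hv
        simp at hv
        obtain ⟨i, hi, h⟩ := (hXmem C v).1 hv
        exact ⟨i, by simpa using hi, h⟩
    simp_rw [this]
    rw [← Finset.card_univ]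
    exact (Finset.card_eq_sum_card_fiberwise (fun v _ => Finset.mem_univ (K v))).symm
  have hnlt : ∀ C i, i < L C → nextIdx (L C) i < L C := by
    intro C i h; unfold nextIdx; split_ifs <;> omega
  have hplt : ∀ C i, i < L C → prevIdx (L C) i < L C := by
    intro C i h; unfold prevIdx; split_ifs <;> omega
  let s : V → V := fun v => X (K v) (nextIdx (L (K v)) (pos v))
  let t : V → V := fun v => X (K v) (prevIdx (L (K v)) (pos v))
  have hKs : ∀ v, K (s v) = K v := fun v => hKX _ _ (hnlt _ _ (hposlt v))
  have hKt : ∀ v, K (t v) = K v := fun v => hKX _ _ (hplt _ _ (hposlt v))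
  have hps : ∀ v, pos (s v) = nextIdx (L (K v)) (pos v) :=
    fun v => hposX _ _ (hnlt _ _ (hposlt v))
  have hpt : ∀ v, pos (t v) = prevIdx (L (K v)) (pos v) :=
    fun v => hposX _ _ (hplt _ _ (hposlt v))
  have hglt : ∀ v, swapLast (L (K v)) (pos v) < L (K v) := by
    intro v
    have := hposlt v
    unfold swapLast; split_ifs <;> omega
  let l : V → ℤ := fun v => k + 1 + a (K v) + swapLast (L (K v)) (pos v)
  have hl : ∀ v, l v = k + 1 + a (K v) + swapLast (L (K v)) (pos v) := fun v => rfl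
  refine main_of_data G hreg k s t (fun v => Even (pos v)) l ?_ ?_ ?_ ?_ ?_ ?_ ?_ ?_ ?_
  · intro v
    apply hext
    · rw [hKs, hKt]
    · rw [hps, hKt, hpt]
      exact next_prev _ _ (hL4 _) (hposlt v)
  · intro v
    apply hext
    · rw [hKt, hKs]
    · rw [hpt, hKs, hps]
      exact prev_next _ _ (hposlt v)
  · intro v h
    have h1 : pos (s v) = pos (t v) := by rw [h]
    rw [hps, hpt] at h1
    have := hposlt v
    have := hL4 (K v)
    unfold nextIdx prevIdx at h1; split_ifs at h1 <;> omega
  · intro v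
    have h0 := hXpos v
    have h1 := hposlt v
    have h2 : G.Adj (X (K v) (pos v)) (s v) := by
      simp only [s, nextIdx]
      split_ifs with h
      · have h3 := hXlast (K v)
        rwa [← h, Nat.add_sub_cancel] at h3
      · exact hXadj _ _ (by omega)
    rwa [h0] at h2
  · intro v
    have h1 := hposlt v
    have h2 := hLe (K v)
    simp only [hps, nextIdx]
    rw [Nat.even_iff] at *
    rw [Nat.even_iff]
    split_ifs <;> omega
  · intro u v h
    rw [hl, hl] at h
    have h1 := hglt u
    have h2 := hglt v
    by_cases hK : K u = K v
    · apply hext _ _ hK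
      have h3 := hposlt u
      have h4 := hposlt v
      rw [hK] at h h1 h3
      have h5 : swapLast (L (K v)) (pos u) = swapLast (L (K v)) (pos v) := by omega
      unfold swapLast at h5
      split_ifs at h5 <;> omega
    · rcases ha2 _ _ hK with h3 | h3 <;> omega
  · intro v; rw [hl]; omega
  · intro v
    rw [hl]
    have h1 := hglt v
    have h2 := ha1 (K v)
    rw [hsumL] at h2
    omega
  · intro u v hP h
    rw [hl, hl, hl, hl, hKt, hKt, hpt, hpt] at h
    have h1 := hglt u
    have h2 := hglt v
    have h1' := hglt (t u)
    have h2' := hglt (t v)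
    rw [hKt, hpt] at h1' h2'
    by_cases hK : K u = K v
    · apply hext _ _ hK
      have h3 := hposlt u
      have h4 := hposlt v
      rw [hK] at h h3
      have h5 : swapLast (L (K v)) (pos u) + swapLast (L (K v)) (prevIdx (L (K v)) (pos u)) =
        swapLast (L (K v)) (pos v) + swapLast (L (K v)) (prevIdx (L (K v)) (pos v)) := by omega
      have h6 := hL4 (K v)
      have h7 := hLe (K v)
      clear h h1 h2 h1' h2'
      generalize L (K v) = M at *
      generalize pos u = i at *
      generalize pos v = j at *
      simp only [Nat.even_iff] at hP h7
      have e1 := swapLast_sum M i h6 h3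
      have e2 := swapLast_sum M j h6 h4
      rw [← h5] at e2
      generalize swapLast M i + swapLast M (prevIdx M i) = S at *
      clear h5
      have hP2 : i % 2 = j % 2 := by omega
      clear hP
      omega
    · rcases ha2 _ _ hK with h3 | h3 <;> omega
end

section
/- Let C be a cycle on m ≥ 3 vertices and let R be a set of n of its vertices with 2 ≤ n ≤ m. Then there exist an orientation D of C and a bijection c from the arc set of D to {1, 2, …, m} such that: every vertex of C not in R has vertex-sum equal to −1; the vertex-sums of the vertices in R are pairwise distinct and nonzero; and any two distinct vertices u, v ∈ R whose vertex-sums have the same sign satisfy |s(u) − s(v)| ≥ 2, where s denotes vertex-sum. -/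
open Finset

/-- A connected 2-regular graph can be enumerated cyclically starting from any vertex. -/
lemma cycle_enum {V : Type*} [Fintype V] [DecidableEq V]
    (C : SimpleGraph V) [DecidableRel C.Adj] (m : ℕ)
    (hcard : Fintype.card V = m)
    (hconn : C.Connected) (hreg : ∀ v : V, C.degree v = 2) (v0 : V) :
    ∃ f : ℕ → V, f 0 = v0 ∧ f m = f 0 ∧ (∀ i j, i < m → j < m → f i = f j → i = j) ∧
      (∀ v, ∃ i, i < m ∧ f i = v) ∧
      (∀ u v, C.Adj u v ↔ ∃ i, i < m ∧ ((f i = u ∧ f (i+1) = v) ∨ (f i = v ∧ f (i+1) = u))) := by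
  have hcyc : C.IsCycles := by
    intro v _
    rw [Set.ncard_eq_toFinset_card', ← SimpleGraph.neighborFinset_def,
      SimpleGraph.card_neighborFinset_eq_degree, hreg]
  have hn : (C.neighborSet v0).Nonempty := by
    have h : 0 < C.degree v0 := by rw [hreg]; norm_num
    rw [SimpleGraph.degree_pos_iff_exists_adj] at h
    exact h
  obtain ⟨p, hp, hpv⟩ := hcyc.exists_cycle_toSubgraph_verts_eq_connectedComponentSupp
    (c := C.connectedComponentMk v0) (v := v0) (by simp) hn
  have hall : ∀ v, v ∈ p.toSubgraph.verts := by
    intro v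
    rw [hpv, SimpleGraph.ConnectedComponent.mem_supp_iff, SimpleGraph.ConnectedComponent.eq]
    exact hconn.preconnected v v0
  have h3 := hp.three_le_length
  have hinj : ∀ i j, i < p.length → j < p.length → p.getVert i = p.getVert j → i = j := by
    intro i j hi hj h
    exact hp.getVert_injOn' (by rw [Set.mem_ofPred_eq]; omega) (by rw [Set.mem_ofPred_eq]; omega) h
  have hsurj : ∀ v, ∃ i, i < p.length ∧ p.getVert i = v := by
    intro v
    have := hall v
    rw [SimpleGraph.Walk.mem_verts_toSubgraph,
      SimpleGraph.Walk.mem_support_iff_exists_getVert] at this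
    obtain ⟨i, hi, hl⟩ := this
    rcases hl.lt_or_eq with h | h
    · exact ⟨i, h, hi⟩
    · refine ⟨0, by omega, ?_⟩
      rw [← hi, h]; simp
  have hlen : p.length = m := by
    rw [← hcard]
    have hb : Function.Bijective (fun i : Fin p.length => p.getVert i) := by
      constructor
      · intro i j h
        exact Fin.ext (hinj i j i.2 j.2 h)
      · intro v
        obtain ⟨i, hi, h⟩ := hsurj v
        exact ⟨⟨i, hi⟩, h⟩
    simpa using Fintype.card_of_bijective hb
  rw [hlen] at hinj hsurj
  refine ⟨p.getVert, by simp, by rw [← hlen]; simp, hinj, hsurj, ?_⟩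
  intro u v
  rw [← hp.adj_toSubgraph_iff_of_isCycles hcyc (hall u), SimpleGraph.Walk.toSubgraph_adj_iff, hlen]
  constructor
  · rintro ⟨i, h, hi⟩
    refine ⟨i, hi, ?_⟩
    simpa using h
  · rintro ⟨i, hi, h⟩
    exact ⟨i, by simpa using h, hi⟩

/-- Position preceding `j` on the cycle with positions `0, …, m-1`. -/
def cycPrev (m j : ℕ) : ℕ := if j = 0 then m - 1 else j - 1

/-- Signed labels on the edges give an orientation together with a labeling. -/
lemma orient_of_signed {V : Type*} [DecidableEq V]
    (C : SimpleGraph V) (m : ℕ) (hm : 3 ≤ m) (f : ℕ → V) (hf0 : f m = f 0)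
    (hinj : ∀ i j, i < m → j < m → f i = f j → i = j)
    (hadj : ∀ u v, C.Adj u v ↔
      ∃ i, i < m ∧ ((f i = u ∧ f (i+1) = v) ∨ (f i = v ∧ f (i+1) = u)))
    (σ : ℕ → ℤ) (hσ : ∀ i < m, 1 ≤ |σ i| ∧ |σ i| ≤ m)
    (hσi : ∀ i j, i < m → j < m → |σ i| = |σ j| → i = j) :
    ∃ (A : Finset (V × V)) (c : V × V → ℤ),
      IsOrientation C A ∧ Set.BijOn c ↑A (Set.Icc 1 (m : ℤ)) ∧
      ∀ j < m, vertexSum A c (f j) = σ (cycPrev m j) - σ j := by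
  classical
  set arc : ℕ → V × V := fun i => if 0 < σ i then (f i, f (i+1)) else (f (i+1), f i) with harc
  -- successor values
  have hnext : ∀ i < m, ∀ j < m, f (i+1) = f j ↔ i = cycPrev m j := by
    intro i hi j hj
    unfold cycPrev
    by_cases h : i + 1 = m
    · rw [h, hf0]
      constructor
      · intro h'
        have := hinj 0 j (by omega) hj h'
        subst this; simp; omega
      · intro h'
        split_ifs at h' with h0
        · rw [h0]
        · omega
    · constructor
      · intro h'
        have := hinj (i+1) j (by omega) hj h'
        subst this; simp
      · intro h'
        split_ifs at h' with h0
        · omega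
        · congr 1; omega
  have hself : ∀ i < m, ∀ j < m, f i = f j ↔ i = j := fun i hi j hj =>
    ⟨hinj i j hi hj, fun h => by rw [h]⟩
  have hnn : ∀ i < m, ∃ k < m, f (i+1) = f k ∧ ((i + 1 = m ∧ k = 0) ∨ k = i + 1) := by
    intro i hi
    by_cases h : i + 1 = m
    · exact ⟨0, by omega, by rw [h, hf0], Or.inl ⟨h, rfl⟩⟩
    · exact ⟨i+1, by omega, rfl, Or.inr rfl⟩
  have hedge : ∀ i < m, ∀ j < m, (f i = f j ∧ f (i+1) = f (j+1)) ∨ (f i = f (j+1) ∧ f (i+1) = f j)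
      → i = j := by
    intro i hi j hj h
    obtain ⟨k, hk, hk1, hk2⟩ := hnn i hi
    obtain ⟨l, hl, hl1, hl2⟩ := hnn j hj
    rw [hk1, hl1] at h
    rcases h with ⟨h, -⟩ | ⟨h, h'⟩
    · exact hinj i j hi hj h
    · have := hinj _ _ hi hl h
      have := hinj _ _ hk hj h'
      omega
  have hne : ∀ i < m, f i ≠ f (i+1) := by
    intro i hi h
    obtain ⟨k, hk, hk1, hk2⟩ := hnn i hi
    rw [hk1] at h
    have := hinj _ _ hi hk h
    omega
  have harcinj : ∀ i < m, ∀ j < m, arc i = arc j → i = j := by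
    intro i hi j hj h
    apply hedge i hi j hj
    simp only [harc] at h
    split_ifs at h <;> simp only [Prod.mk.injEq] at h <;> tauto
  have harcinj' : Set.InjOn arc (Finset.range m : Set ℕ) := by
    intro i hi j hj h
    simp at hi hj
    exact harcinj i hi j hj h
  set c : V × V → ℤ := fun a => |σ (Function.invFunOn arc (Finset.range m : Set ℕ) a)| with hc
  have hcarc : ∀ i < m, c (arc i) = |σ i| := by
    intro i hi
    simp only [hc]
    rw [harcinj'.leftInvOn_invFunOn (by simpa using hi)]
  have hmem : ∀ a, a ∈ (Finset.range m).image arc ↔ ∃ i < m, arc i = a := by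
    intro a; simp
  refine ⟨(Finset.range m).image arc, c, ⟨?_, ?_⟩, ?_, ?_⟩
  · intro u v
    rw [hadj, hmem, hmem]
    constructor
    · rintro ⟨i, hi, h⟩
      by_cases hs : 0 < σ i
      · rcases h with ⟨rfl, rfl⟩ | ⟨rfl, rfl⟩
        · exact Or.inl ⟨i, hi, by simp [harc, hs]⟩
        · exact Or.inr ⟨i, hi, by simp [harc, hs]⟩
      · rcases h with ⟨rfl, rfl⟩ | ⟨rfl, rfl⟩
        · exact Or.inr ⟨i, hi, by simp only [harc, if_neg hs]⟩
        · exact Or.inl ⟨i, hi, by simp only [harc, if_neg hs]⟩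
    · rintro (⟨i, hi, h⟩ | ⟨i, hi, h⟩) <;> refine ⟨i, hi, ?_⟩ <;> simp only [harc] at h <;>
        split_ifs at h <;> simp only [Prod.mk.injEq] at h <;> tauto
  · rintro u v ⟨h1, h2⟩
    rw [hmem] at h1 h2
    obtain ⟨i, hi, h1⟩ := h1
    obtain ⟨j, hj, h2⟩ := h2
    have hij : i = j := by
      apply hedge i hi j hj
      simp only [harc] at h1 h2
      split_ifs at h1 h2 <;> simp only [Prod.mk.injEq] at h1 h2 <;>
        obtain ⟨rfl, rfl⟩ := h1 <;> tauto
    subst hij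
    rw [h1] at h2
    have huv : u = v := by simp only [Prod.mk.injEq] at h2; exact h2.1
    have := hne i hi
    simp only [harc] at h1
    split_ifs at h1 <;> simp only [Prod.mk.injEq] at h1 <;> apply this <;> rw [h1.1, h1.2, huv]
  · have hmaps : ∀ a ∈ (Finset.range m).image arc, c a ∈ Finset.Icc 1 (m : ℤ) := by
      intro a ha
      rw [hmem] at ha
      obtain ⟨i, hi, rfl⟩ := ha
      rw [hcarc i hi, Finset.mem_Icc]
      exact hσ i hi
    have hinjc : Set.InjOn c ((Finset.range m).image arc : Finset (V × V)) := by
      intro a ha b hb h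
      rw [Finset.mem_coe, hmem] at ha hb
      obtain ⟨i, hi, rfl⟩ := ha
      obtain ⟨j, hj, rfl⟩ := hb
      rw [hcarc i hi, hcarc j hj] at h
      rw [hσi i j hi hj h]
    refine ⟨?_, hinjc, ?_⟩
    · intro a ha
      simpa using hmaps a ha
    · have := Finset.surjOn_of_injOn_of_card_le c (s := (Finset.range m).image arc)
        (t := Finset.Icc 1 (m : ℤ)) (by intro a ha; exact hmaps a ha) hinjc (by
          rw [Finset.card_image_of_injOn harcinj']; simp)
      simpa using this
  · intro j hj
    unfold vertexSum
    rw [Finset.sum_filter, Finset.sum_filter, Finset.sum_image harcinj',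
      Finset.sum_image harcinj', ← Finset.sum_sub_distrib]
    have hpm : cycPrev m j < m := by unfold cycPrev; split_ifs <;> omega
    have hterm : ∀ i ∈ Finset.range m,
        ((if (arc i).2 = f j then c (arc i) else 0) - (if (arc i).1 = f j then c (arc i) else 0))
        = (if i = cycPrev m j then σ i else 0) - (if i = j then σ i else 0) := by
      intro i hi
      rw [Finset.mem_range] at hi
      rw [hcarc i hi]
      have e1 := hnext i hi j hj
      have e2 := hself i hi j hj
      simp only [harc]
      by_cases hs : 0 < σ i
      · simp only [if_pos hs, e1, e2, abs_of_pos hs]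
      · simp only [if_neg hs, e1, e2, abs_of_nonpos (not_lt.mp hs)]
        split_ifs <;> ring
    rw [Finset.sum_congr rfl hterm, Finset.sum_sub_distrib, Finset.sum_ite_eq' , Finset.sum_ite_eq',
      if_pos (by simpa using hpm), if_pos (by simpa using hj)]

/-- Zigzag rank of the `k`-th segment among `n` segments. -/
def zigRank (n k : ℕ) : ℕ := if k = 0 then 0 else if 2 * k ≤ n then 2 * k - 1 else 2 * (n - k)

lemma zigRank_pair (n a b : ℕ) (hn : 4 ≤ n) (hev : n % 2 = 0) (ha : a < n) (hb : b < n)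
    (h : (b = 0 ∧ a = n - 1) ∨ b = a + 1) :
    (b = 0 ∧ zigRank n a = 2 ∧ zigRank n b = 0) ∨
    (b = 1 ∧ zigRank n a = 0 ∧ zigRank n b = 1) ∨
    (2 ≤ b ∧ 2 * b ≤ n ∧ zigRank n a + 3 = 2 * b ∧ zigRank n b + 1 = 2 * b) ∨
    (2 * b = n + 2 ∧ zigRank n a + 1 = n ∧ zigRank n b + 2 = n) ∨
    (n + 4 ≤ 2 * b ∧ zigRank n a + 2 * b = 2 * n + 2 ∧ zigRank n b + 2 * b = 2 * n) := by
  unfold zigRank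
  rcases h with ⟨rfl, rfl⟩ | rfl
  · left
    rw [if_neg (by omega), if_neg (by omega)]
    simp; omega
  · right
    rw [if_neg (show ¬ (a + 1 = 0) by omega)]
    by_cases h0 : a = 0
    · left; subst h0; simp; omega
    · right
      rw [if_neg h0]
      by_cases h1 : 2 * (a + 1) ≤ n
      · left
        rw [if_pos h1, if_pos (by omega)]; omega
      · right
        rw [if_neg h1]
        by_cases h2 : 2 * a ≤ n
        · left; rw [if_pos h2]; omega
        · right; rw [if_neg h2]; omega

lemma zigRank_sep (n : ℕ) (hev : n % 2 = 0) (a b c d : ℕ) (ha : a < n) (hb : b < n) (hc : c < n)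
    (hd : d < n) (h1 : (b = 0 ∧ a = n - 1) ∨ b = a + 1) (h2 : (d = 0 ∧ c = n - 1) ∨ d = c + 1)
    (h3 : b % 2 = d % 2) (h4 : b ≠ d) :
    (zigRank n a < zigRank n c ∧ zigRank n b < zigRank n d) ∨
    (zigRank n a < zigRank n d ∧ zigRank n b < zigRank n c) ∨
    (zigRank n c < zigRank n a ∧ zigRank n d < zigRank n b) ∨
    (zigRank n d < zigRank n a ∧ zigRank n c < zigRank n b) := by
  have hn : 4 ≤ n := by omega
  have q1 := zigRank_pair n a b hn hev ha hb h1
  have q2 := zigRank_pair n c d hn hev hc hd h2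
  clear h1 h2
  generalize zigRank n a = ra at *
  generalize zigRank n b = rb at *
  generalize zigRank n c = rc at *
  generalize zigRank n d = rd at *
  rcases q1 with q1 | q1 | q1 | q1 | q1 <;> rcases q2 with q2 | q2 | q2 | q2 | q2 <;> omega

set_option maxHeartbeats 2000000 in
lemma comb_labels (m n : ℕ) (S : Finset ℕ) (hS : ∀ s ∈ S, s < m) (h0 : 0 ∈ S)
    (hn : S.card = n) (hev : Even n) (hn2 : 2 ≤ n) :
    ∃ σ : ℕ → ℤ, (∀ i < m, 1 ≤ |σ i| ∧ |σ i| ≤ m) ∧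
      (∀ i j, i < m → j < m → |σ i| = |σ j| → i = j) ∧
      (∀ j < m, j ∉ S → σ (cycPrev m j) - σ j = -1) ∧
      (∀ j ∈ S, 3 ≤ |σ (cycPrev m j) - σ j|) ∧
      (∀ i ∈ S, ∀ j ∈ S, i ≠ j →
        (σ (cycPrev m i) - σ i) * (σ (cycPrev m j) - σ j) > 0 →
        2 ≤ |(σ (cycPrev m i) - σ i) - (σ (cycPrev m j) - σ j)|) := by
  classical
  -- segment index
  obtain ⟨k, hk⟩ : ∃ k : ℕ → ℕ, ∀ i, (S.filter (· ≤ i)).card = k i + 1 := by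
    refine ⟨fun i => (S.filter (· ≤ i)).card - 1, fun i => ?_⟩
    have : 0 < (S.filter (· ≤ i)).card := Finset.card_pos.mpr ⟨0, by simp [h0]⟩
    show _ = _ - 1 + 1
    omega
  have hm0 : 0 < m := hS 0 h0
  have hk0 : k 0 = 0 := by
    have : S.filter (· ≤ 0) = {0} := by ext x; simp; grind
    have h := hk 0
    rw [this] at h; simp at h; exact h
  have hkn : ∀ i, k i < n := by
    intro i
    have := Finset.card_filter_le S (· ≤ i)
    rw [hk] at this; omega
  have hklast : k (m-1) = n - 1 := by
    have : S.filter (· ≤ m-1) = S := by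
      apply Finset.filter_true_of_mem
      intro x hx; have := hS x hx; omega
    have h := hk (m-1)
    rw [this] at h; omega
  have hkstep : ∀ i, i + 1 ∈ S → k (i+1) = k i + 1 := by
    intro i hi
    have : S.filter (· ≤ i+1) = insert (i+1) (S.filter (· ≤ i)) := by ext x; simp; grind
    have h := hk (i+1)
    rw [this, Finset.card_insert_of_notMem (by simp), hk] at h; omega
  have hkstay : ∀ i, i + 1 ∉ S → k (i+1) = k i := by
    intro i hi
    have : S.filter (· ≤ i+1) = S.filter (· ≤ i) := by ext x; simp; grind
    have h := hk (i+1)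
    rw [this, hk] at h; omega
  have hkmono : Monotone k := by
    apply monotone_nat_of_le_succ
    intro i
    by_cases h : i + 1 ∈ S
    · rw [hkstep i h]; omega
    · rw [hkstay i h]
  have hkinj : ∀ i ∈ S, ∀ j ∈ S, k i = k j → i = j := by
    have aux : ∀ i j, j ∈ S → i < j → k i < k j := by
      intro i j hj hij
      obtain ⟨j, rfl⟩ : ∃ j', j = j' + 1 := ⟨j - 1, by omega⟩
      have := hkmono (show i ≤ j by omega)
      rw [hkstep j hj]; omega
    intro i hi j hj h
    rcases lt_trichotomy i j with h' | h' | h'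
    · have := aux i j hj h'; omega
    · exact h'
    · have := aux j i hi h'; omega
  -- sorting key
  set key : ℕ → ℕ := fun i =>
    zigRank n (k i) * m + (if Even (k i) then i else m - 1 - i) with hkey
  have hkeylt : ∀ a < m, ∀ b < m, zigRank n (k a) < zigRank n (k b) → key a < key b := by
    intro a ha b hb h
    have h1 : (zigRank n (k a) + 1) * m ≤ zigRank n (k b) * m := Nat.mul_le_mul_right m h
    have h2 : (if Even (k a) then a else m - 1 - a) < m := by split_ifs <;> omega
    simp only [hkey]
    rw [add_mul] at h1
    omega
  have hrinj : ∀ a b, zigRank n (k a) = zigRank n (k b) → k a = k b := by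
    intro a b h
    have := hkn a
    have := hkn b
    unfold zigRank at h
    split_ifs at h <;> omega
  have hkeyinj : ∀ a < m, ∀ b < m, key a = key b → a = b := by
    intro a ha b hb h
    rcases lt_trichotomy (zigRank n (k a)) (zigRank n (k b)) with h' | h' | h'
    · have := hkeylt a ha b hb h'; omega
    · have h2 := hrinj a b h'
      simp only [hkey, h2] at h
      split_ifs at h <;> omega
    · have := hkeylt b hb a ha h'; omega
  set lab : ℕ → ℕ := fun i => ((Finset.range m).filter (fun j => key j ≤ key i)).card with hlab
  have hlab1 : ∀ i < m, 1 ≤ lab i := by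
    intro i hi
    exact Finset.card_pos.mpr ⟨i, by simp [hi]⟩
  have hlabm : ∀ i, lab i ≤ m := by
    intro i
    have := Finset.card_filter_le (Finset.range m) (fun j => key j ≤ key i)
    simpa using this
  have hlablt : ∀ a < m, ∀ b < m, key a < key b → lab a < lab b := by
    intro a ha b hb h
    apply Finset.card_lt_card
    rw [Finset.ssubset_iff_of_subset]
    · exact ⟨b, by simp [hb], by simp [h]⟩
    · intro x; simp only [Finset.mem_filter]; intro hx; exact ⟨hx.1, by omega⟩
  have hlabinj : ∀ a < m, ∀ b < m, lab a = lab b → a = b := by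
    intro a ha b hb h
    apply hkeyinj a ha b hb
    rcases lt_trichotomy (key a) (key b) with h' | h' | h'
    · have := hlablt a ha b hb h'; omega
    · exact h'
    · have := hlablt b hb a ha h'; omega
  have hlabsucc : ∀ a < m, ∀ b < m, key b = key a + 1 → lab b = lab a + 1 := by
    intro a ha b hb h
    have : (Finset.range m).filter (fun j => key j ≤ key b) =
        insert b ((Finset.range m).filter (fun j => key j ≤ key a)) := by
      ext x
      simp only [Finset.mem_filter, Finset.mem_insert, Finset.mem_range]
      constructor
      · rintro ⟨hx, hx'⟩
        by_cases hxa : key x ≤ key a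
        · exact Or.inr ⟨hx, hxa⟩
        · exact Or.inl (hkeyinj x hx b hb (by omega))
      · rintro (rfl | ⟨hx, hx'⟩)
        · exact ⟨hb, le_rfl⟩
        · exact ⟨hx, by omega⟩
    simp only [hlab]
    rw [this, Finset.card_insert_of_notMem (by simp [h])]
  set σ : ℕ → ℤ := fun i => if Even (k i) then (lab i : ℤ) else -(lab i : ℤ) with hσ
  have hσabs : ∀ i, |σ i| = lab i := by
    intro i
    simp only [hσ]
    split_ifs <;> simp
  have hpm : ∀ j < m, cycPrev m j < m := by
    intro j hj; unfold cycPrev; split_ifs <;> omega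
  have hkprev : ∀ j ∈ S, (k j = 0 ∧ k (cycPrev m j) = n - 1) ∨ k j = k (cycPrev m j) + 1 := by
    intro j hj
    unfold cycPrev
    split_ifs with h
    · subst h; exact Or.inl ⟨hk0, hklast⟩
    · right
      obtain ⟨j, rfl⟩ : ∃ j', j = j' + 1 := ⟨j - 1, by omega⟩
      simpa using hkstep j hj
  have hev' : n % 2 = 0 := Nat.even_iff.mp hev
  have hreal : ∀ j ∈ S, σ (cycPrev m j) - σ j =
      if Even (k j) then -((lab (cycPrev m j) : ℤ) + lab j) else (lab (cycPrev m j) : ℤ) + lab j := by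
    intro j hj
    have h := hkprev j hj
    simp only [hσ, Nat.even_iff]
    split_ifs <;> omega
  have hdist : ∀ j ∈ S, lab (cycPrev m j) ≠ lab j := by
    intro j hj h
    have := hlabinj _ (hpm j (hS j hj)) _ (hS j hj) h
    have h2 := hkprev j hj
    rw [this] at h2
    omega
  refine ⟨σ, ?_, ?_, ?_, ?_, ?_⟩
  · intro i hi
    rw [hσabs]
    exact ⟨by exact_mod_cast hlab1 i hi, by exact_mod_cast hlabm i⟩
  · intro i j hi hj h
    rw [hσabs, hσabs] at h
    exact hlabinj i hi j hj (by exact_mod_cast h)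
  · intro j hj hjS
    have hj0 : j ≠ 0 := by rintro rfl; exact hjS h0
    obtain ⟨j, rfl⟩ : ∃ j', j = j' + 1 := ⟨j - 1, by omega⟩
    have hk' := hkstay j hjS
    have hp : cycPrev m (j+1) = j := by simp [cycPrev]
    rw [hp]
    simp only [hσ, hk']
    by_cases he : Even (k j)
    · have := hlabsucc j (by omega) (j+1) hj (by simp only [hkey, hk', if_pos he]; omega)
      simp only [if_pos he]; omega
    · have := hlabsucc (j+1) hj j (by omega) (by simp only [hkey, hk', if_neg he]; omega)
      simp only [if_neg he]; omega
  · intro j hj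
    have h1 := hlab1 j (hS j hj)
    have h2 := hlab1 _ (hpm j (hS j hj))
    have h3 := hdist j hj
    rw [hreal j hj]
    rw [le_abs]
    split_ifs <;> omega
  · intro i hi j hj hij hpos
    have hiS := hS i hi
    have hjS := hS j hj
    have hkij : k i ≠ k j := fun h => hij (hkinj i hi j hj h)
    have hpar : k i % 2 = k j % 2 := by
      by_contra hcon
      rw [hreal i hi, hreal j hj] at hpos
      have a1 : (0:ℤ) < (lab (cycPrev m i) : ℤ) + lab i := by have := hlab1 i hiS; omega
      have a2 : (0:ℤ) < (lab (cycPrev m j) : ℤ) + lab j := by have := hlab1 j hjS; omega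
      simp only [Nat.even_iff] at hpos
      split_ifs at hpos
      · omega
      · nlinarith [mul_pos a1 a2]
      · nlinarith [mul_pos a1 a2]
      · omega
    have hgap : lab (cycPrev m i) + lab i + 2 ≤ lab (cycPrev m j) + lab j ∨
        lab (cycPrev m j) + lab j + 2 ≤ lab (cycPrev m i) + lab i := by
      have L : ∀ a < m, ∀ b < m, zigRank n (k a) < zigRank n (k b) → lab a < lab b :=
        fun a ha b hb h => hlablt a ha b hb (hkeylt a ha b hb h)
      have pi := hpm i hiS
      have pj := hpm j hjS
      have l1 := L _ hiS _ hjS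
      have l2 := L _ hiS _ pj
      have l3 := L _ pi _ hjS
      have l4 := L _ pi _ pj
      have l5 := L _ hjS _ hiS
      have l6 := L _ pj _ hiS
      have l7 := L _ hjS _ pi
      have l8 := L _ pj _ pi
      rcases zigRank_sep n hev' _ _ _ _ (hkn (cycPrev m i)) (hkn i) (hkn (cycPrev m j)) (hkn j) (hkprev i hi)
        (hkprev j hj) hpar hkij with h | h | h | h
      · have := l4 h.1; have := l1 h.2; omega
      · have := l3 h.1; have := l2 h.2; omega
      · have := l8 h.1; have := l5 h.2; omega
      · have := l7 h.1; have := l6 h.2; omega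
    rw [hreal i hi, hreal j hj]
    simp only [Nat.even_iff, hpar]
    rw [le_abs]
    split_ifs <;> omega

/-- Key construction: let C be a cycle on m ≥ 3 vertices (i.e. a connected 2-regular graph
on m vertices) and let R be a set of n of its vertices with 2 ≤ n ≤ m. Then C has an
orientation and a bijective arc-labeling by {1, …, m} such that every vertex outside R has
vertex-sum −1, the vertex-sums of vertices of R are pairwise distinct and nonzero, and any
two distinct vertices of R whose vertex-sums have the same sign have vertex-sums differing
by at least 2. -/
theorem cycle_labeling_real_imaginary
    {V : Type*} [Fintype V] [DecidableEq V]
    (C : SimpleGraph V) [DecidableRel C.Adj] (m n : ℕ)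
    (hm : 3 ≤ m) (hcard : Fintype.card V = m)
    (hconn : C.Connected) (hreg : ∀ v : V, C.degree v = 2)
    (R : Finset V) (hR : R.card = n) (hn2 : 2 ≤ n) (hnm : n ≤ m) :
    ∃ (A : Finset (V × V)) (c : V × V → ℤ),
      IsOrientation C A ∧
      Set.BijOn c ↑A (Set.Icc 1 (m : ℤ)) ∧
      (∀ v : V, v ∉ R → vertexSum A c v = -1) ∧
      (∀ u ∈ R, ∀ v ∈ R, u ≠ v → vertexSum A c u ≠ vertexSum A c v) ∧
      (∀ u ∈ R, vertexSum A c u ≠ 0) ∧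
      (∀ u ∈ R, ∀ v ∈ R, u ≠ v → vertexSum A c u * vertexSum A c v > 0 →
        2 ≤ |vertexSum A c u - vertexSum A c v|) := by
  classical
  -- choose an even-size subset of R, the vertex left out (if any) gets sum -1
  obtain ⟨R', hsub, n', hn', hev, hn2', hout⟩ : ∃ R' ⊆ R, ∃ n', R'.card = n' ∧ Even n' ∧ 2 ≤ n' ∧
      (∀ u ∈ R, ∀ v ∈ R, u ∉ R' → v ∉ R' → u = v) := by
    rcases Nat.even_or_odd n with h | h
    · exact ⟨R, subset_rfl, n, hR, h, hn2, fun u hu v hv h1 => absurd hu h1⟩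
    · obtain ⟨w, hw⟩ : R.Nonempty := Finset.card_pos.mp (by omega)
      refine ⟨R.erase w, Finset.erase_subset _ _, n - 1, ?_, ?_, ?_, ?_⟩
      · rw [Finset.card_erase_of_mem hw, hR]
      · rw [Nat.even_iff]; rw [Nat.odd_iff] at h; omega
      · rw [Nat.odd_iff] at h; omega
      · intro u hu v hv h1 h2
        simp only [Finset.mem_erase, not_and, not_imp_not] at h1 h2
        have e1 : u = w := by by_contra hc; exact hc (h1 hu)
        have e2 : v = w := by by_contra hc; exact hc (h2 hv)
        rw [e1, e2]
  obtain ⟨v0, hv0⟩ : R'.Nonempty := Finset.card_pos.mp (by omega)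
  obtain ⟨f, hf0, hfm, hinj, hsurj, hadj⟩ := cycle_enum C m hcard hconn hreg v0
  set S := (Finset.range m).filter (fun i => f i ∈ R') with hS
  have hSmem : ∀ i, i ∈ S ↔ i < m ∧ f i ∈ R' := by intro i; simp [hS]
  have hScard : S.card = n' := by
    rw [← hn']
    apply Finset.card_bij (fun i _ => f i)
    · intro i hi; exact ((hSmem i).mp hi).2
    · intro i hi j hj h; exact hinj i j ((hSmem i).mp hi).1 ((hSmem j).mp hj).1 h
    · intro v hv
      obtain ⟨i, hi, rfl⟩ := hsurj v
      exact ⟨i, (hSmem i).mpr ⟨hi, hv⟩, rfl⟩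
  obtain ⟨σ, h1, h2, h3, h4, h5⟩ := comb_labels m n' S (fun s hs => ((hSmem s).mp hs).1)
    ((hSmem 0).mpr ⟨by omega, by rw [hf0]; exact hv0⟩) hScard hev hn2'
  obtain ⟨A, c, hA, hc, hsum⟩ := orient_of_signed C m hm f hfm hinj hadj σ h1 h2
  have g1 : ∀ v, v ∉ R' → vertexSum A c v = -1 := by
    intro v hv
    obtain ⟨i, hi, rfl⟩ := hsurj v
    rw [hsum i hi]
    exact h3 i hi (fun h => hv ((hSmem i).mp h).2)
  have g2 : ∀ v ∈ R', 3 ≤ |vertexSum A c v| := by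
    intro v hv
    obtain ⟨i, hi, rfl⟩ := hsurj v
    rw [hsum i hi]
    exact h4 i ((hSmem i).mpr ⟨hi, hv⟩)
  have g3 : ∀ u ∈ R', ∀ v ∈ R', u ≠ v → vertexSum A c u * vertexSum A c v > 0 →
      2 ≤ |vertexSum A c u - vertexSum A c v| := by
    intro u hu v hv huv
    obtain ⟨i, hi, rfl⟩ := hsurj u
    obtain ⟨j, hj, rfl⟩ := hsurj v
    rw [hsum i hi, hsum j hj]
    exact h5 i ((hSmem i).mpr ⟨hi, hu⟩) j ((hSmem j).mpr ⟨hj, hv⟩) (fun h => huv (by rw [h]))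
  have g0 : ∀ u, vertexSum A c u ≠ 0 := by
    intro u h
    by_cases hu : u ∈ R'
    · have := g2 u hu; rw [h] at this; simp at this
    · have := g1 u hu; omega
  have g4 : ∀ u ∈ R, ∀ v ∈ R, u ≠ v → vertexSum A c u * vertexSum A c v > 0 →
      2 ≤ |vertexSum A c u - vertexSum A c v| := by
    intro u hu v hv huv hpos
    by_cases hu' : u ∈ R' <;> by_cases hv' : v ∈ R'
    · exact g3 u hu' v hv' huv hpos
    · have a := g2 u hu'
      rw [g1 v hv'] at hpos ⊢
      rw [abs_of_neg (by linarith)] at a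
      rw [le_abs]; right; linarith
    · have a := g2 v hv'
      rw [g1 u hu'] at hpos ⊢
      rw [abs_of_neg (by linarith)] at a
      rw [le_abs]; left; linarith
    · exact absurd (hout u hu v hv hu' hv') huv
  refine ⟨A, c, hA, hc, fun v hv => g1 v (fun h => hv (hsub h)), ?_, fun u _ => g0 u, g4⟩
  intro u hu v hv huv h
  have := g4 u hu v hv huv (by rw [h]; exact mul_self_pos.mpr (g0 v))
  rw [h] at this
  simp at this
end
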